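/- arXiv:1905.12315 — 3 statements merged into one kernel-verified Lean document; each statement's English description precedes it below -/
import Mathlib

section
/- Let s, R > 0 be arbitrary. Then for any sequence (k_n) of nonnegative integers with k_n ≤ n^s for all n, the optimal asymptotic error probability of A_n-codes at rate R equals that of k_n+1 B_n-codes at rate R: ε_A(R) = ε_B(R; (k_n)). -/
open MeasureTheory Filter Topology
open scoped ENNReal

noncomputable section

/-- An `A`-code: the encoder has access to the side information. -/
structure ACode (X1 X2 : Type) where
  M : ℕ
  hM : 1 ≤ M
  enc : X1 × X2 → Fin M
  dec : Fin M × X2 → X1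

/-- The composite map of an `A`-code. -/
def ACode.map {X1 X2 : Type} (c : ACode X1 X2) (p : X1 × X2) : X1 :=
  c.dec (c.enc p, p.2)

/-- The set of correctly decoded pairs for an `A`-code. -/
def ACode.T {X1 X2 : Type} (c : ACode X1 X2) : Set (X1 × X2) :=
  {p | c.map p = p.1}

/-- A `B`-code: the encoder has no access to the side information. -/
structure BCode (X1 X2 : Type) where
  M : ℕ
  hM : 1 ≤ M
  enc : X1 → Fin M
  dec : Fin M × X2 → X1

/-- The composite map of a `B`-code. -/
def BCode.map {X1 X2 : Type} (c : BCode X1 X2) (p : X1 × X2) : X1 :=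
  c.dec (c.enc p.1, p.2)

/-- The set of correctly decoded pairs for a `B`-code. -/
def BCode.T {X1 X2 : Type} (c : BCode X1 X2) : Set (X1 × X2) :=
  {p | c.map p = p.1}

/-- Rate of a sequence of `A`-codes. -/
def rateA {X1 X2 : ℕ → Type} (c : ∀ n, ACode (X1 n) (X2 n)) : EReal :=
  Filter.limsup (fun n : ℕ => (((n : ℝ)⁻¹ * Real.log ((c n).M : ℝ) : ℝ) : EReal))
    Filter.atTop

/-- Rate of a sequence of `B`-codes. -/
def rateB {X1 X2 : ℕ → Type} (c : ∀ n, BCode (X1 n) (X2 n)) : EReal :=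
  Filter.limsup (fun n : ℕ => (((n : ℝ)⁻¹ * Real.log ((c n).M : ℝ) : ℝ) : EReal))
    Filter.atTop

/-- Rate of a multi-sequence of `B`-codes: `limsup (1/n) log (max_i M_{i,n})`. -/
def rateBMulti {X1 X2 : ℕ → Type} (k : ℕ → ℕ)
    (c : ∀ n, Fin (k n + 1) → BCode (X1 n) (X2 n)) : EReal :=
  Filter.limsup
    (fun n : ℕ => (((n : ℝ)⁻¹ * Real.log (⨆ i, ((c n i).M : ℝ)) : ℝ) : EReal))
    Filter.atTop

/-- `ε_A(R)`. -/
def epsA {X1 X2 : ℕ → Type} [∀ n, MeasurableSpace (X1 n)] [∀ n, MeasurableSpace (X2 n)]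
    (μ : ∀ n, Measure (X1 n × X2 n)) (R : ℝ) : ℝ≥0∞ :=
  ⨅ (c : ∀ n, ACode (X1 n) (X2 n)) (_ : rateA c ≤ (R : EReal)),
    Filter.limsup (fun n => μ n ((c n).T)ᶜ) Filter.atTop

/-- `ε_B(R;(k_n))`. -/
def epsBMulti {X1 X2 : ℕ → Type} [∀ n, MeasurableSpace (X1 n)] [∀ n, MeasurableSpace (X2 n)]
    (k : ℕ → ℕ) (μ : ∀ n, Measure (X1 n × X2 n)) (R : ℝ) : ℝ≥0∞ :=
  ⨅ (c : ∀ n, Fin (k n + 1) → BCode (X1 n) (X2 n)) (_ : rateBMulti k c ≤ (R : EReal)),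
    Filter.limsup (fun n => μ n (⋂ i, ((c n i).T)ᶜ)) Filter.atTop

/-! The encoder of an `A`-code can find out which of `k + 1` given `B`-codes is correct and transmit
that index as well, so `k + 1` `B`-codes are no better than one `A`-code that is larger by a factor
`k + 1`.

Conversely, an `A`-code of size `M` leaves, for each `y`, a list of at most `M` candidates for `x`.
Colour the letters with `K * M` colours: on average the true `x` shares its colour with another
candidate with probability at most `1 / K`, so for a good colouring a single `B`-code that transmits
the colour loses at most `1 / K`. Singletons need not be measurable for an arbitrary σ-algebra on
the letters, so it is the measurable atoms that are coloured. They are grouped into dyadic levels by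
size, because a list of `M` candidates contains at most `M / 2 ^ j` atoms of level `j`, and the
position of the letter inside its atom is transmitted in full. With `K = n + 1`, the size grows by a
factor that is at most quadratic in `n`, which does not affect the rate.
-/

open Finset in
lemma sum_offDiag_insert {ι M : Type*} [DecidableEq ι] [AddCommMonoid M] {S : Finset ι} {a : ι}
    (ha : a ∉ S) (w : ι × ι → M) :
    ∑ p ∈ (insert a S).offDiag, w p = ∑ p ∈ S.offDiag, w p + ∑ i ∈ S, (w (a, i) + w (i, a)) := by
  have hdisj₁ : Disjoint S.offDiag ({a} ×ˢ S) := by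
    simp only [disjoint_left, mem_offDiag, mem_product, mem_singleton]
    rintro ⟨i, j⟩ ⟨hi, -, -⟩ ⟨rfl, -⟩
    exact ha hi
  have hdisj₂ : Disjoint (S.offDiag ∪ {a} ×ˢ S) (S ×ˢ {a}) := by
    simp only [disjoint_left, mem_union, mem_offDiag, mem_product, mem_singleton]
    rintro ⟨i, j⟩ (⟨-, hj, -⟩ | ⟨-, hj⟩) ⟨-, rfl⟩ <;> exact ha hj
  rw [offDiag_insert ha, sum_union hdisj₂, sum_union hdisj₁, sum_product, sum_product,
    sum_singleton, sum_add_distrib, add_assoc]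
  simp only [sum_singleton]

-- Greedy colouring: each new index receives the colour that adds the least weight, which is at most
-- the average over all colours.
open Finset in
lemma exists_coloring_sum_offDiag_le {ι κ : Type*} [DecidableEq κ] {T : Finset κ}
    (hT : T.Nonempty) (w : ι × ι → ℝ≥0∞) (S : Finset ι) :
    ∃ h : ι → κ, (∀ i, h i ∈ T) ∧
      ∑ p ∈ S.offDiag, (if h p.1 = h p.2 then w p else 0) ≤ (∑ p ∈ S.offDiag, w p) / #T := by
  classical
  induction S using Finset.induction_on with
  | empty => exact ⟨fun _ => hT.choose, fun _ => hT.choose_spec, by simp⟩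
  | insert a S ha ih =>
    obtain ⟨h, hT_mem, hle⟩ := ih
    let newWeight : ι → ℝ≥0∞ := fun i => w (a, i) + w (i, a)
    have hcard : (#T : ℝ≥0∞) ≠ 0 := by exact_mod_cast hT.card_ne_zero
    obtain ⟨t, ht, ht_le⟩ : ∃ t ∈ T, ∑ i ∈ S with h i = t, newWeight i
        ≤ (∑ i ∈ S, newWeight i) / #T := by
      refine ENNReal.exists_le_of_sum_le hT ?_
      rw [sum_fiberwise_of_maps_to (fun i _ => hT_mem i), sum_const, nsmul_eq_mul,
        ENNReal.mul_div_cancel hcard (ENNReal.natCast_ne_top _)]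
    have hne : ∀ i ∈ S, i ≠ a := fun i hi => ne_of_mem_of_not_mem hi ha
    refine ⟨Function.update h a t, fun i => ?_, ?_⟩
    · obtain rfl | hi := eq_or_ne i a
      · rwa [Function.update_self]
      · rw [Function.update_of_ne hi]
        exact hT_mem i
    rw [sum_offDiag_insert ha, sum_offDiag_insert ha, ENNReal.add_div]
    refine add_le_add (le_of_eq_of_le (sum_congr rfl fun p hp => ?_) hle)
      (le_of_eq_of_le ?_ ht_le)
    · obtain ⟨h₁, h₂, -⟩ := mem_offDiag.1 hp
      rw [Function.update_of_ne (hne _ h₁), Function.update_of_ne (hne _ h₂)]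
    · rw [sum_filter]
      refine sum_congr rfl fun i hi => ?_
      rw [Function.update_self, Function.update_of_ne (hne i hi)]
      simp only [newWeight, eq_comm (a := t)]
      split_ifs <;> simp

section Collisions

variable {ι κ Z : Type*}

/-- The points at which colouring the indices by `h` confuses two of the sets: the true index `i` of
the point is the one with `z ∈ B i`, and `j` is a competitor of the same colour when `z ∈ C j`. -/
def collisionSet (S : Finset ι) (h : ι → κ) (B C : ι → Set Z) : Set Z :=
  {z | ∃ i ∈ S, ∃ j ∈ S, i ≠ j ∧ h i = h j ∧ z ∈ B i ∧ z ∈ C j}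

lemma sum_measure_inter_le [MeasurableSpace Z] (μ : Measure Z) {S : Finset ι} {C : ι → Set Z}
    (hC : ∀ i, MeasurableSet (C i)) {m : ℕ} (hm : ∀ z, {i ∈ (S : Set ι) | z ∈ C i}.encard ≤ m)
    (B : Set Z) :
    ∑ i ∈ S, μ (B ∩ C i) ≤ m * μ B := by
  have hm' (z : Z) : {i : S | z ∈ C i}.encard ≤ m := by
    refine le_trans ?_ (hm z)
    rw [← Subtype.val_injective.encard_image]
    refine Set.encard_le_encard ?_
    rintro _ ⟨i, hi, rfl⟩
    exact ⟨i.2, hi⟩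
  have hle := Measure.sum_restrict_le (μ := μ) (fun i : S => hC i) hm'
  calc ∑ i ∈ S, μ (B ∩ C i) = ∑ i : S, μ.restrict (C i) B := by
        rw [← Finset.sum_coe_sort S]
        exact Finset.sum_congr rfl fun i _ => (Measure.restrict_apply' (hC i)).symm
    _ = Measure.sum (fun i : S => μ.restrict (C i)) B := by
        rw [Measure.sum_fintype, Measure.coe_finsetSum, Finset.sum_apply]
    _ ≤ (m • μ.restrict (⋃ i : S, C i)) B := hle B
    _ ≤ m * μ B := by
        rw [Measure.smul_apply, nsmul_eq_mul]
        gcongr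
        exact Measure.restrict_le_self

lemma exists_coloring_measure_collisionSet_le [MeasurableSpace Z] (μ : Measure Z) (S : Finset ι)
    (B : ι → Set Z) {C : ι → Set Z} (hC : ∀ i, MeasurableSet (C i)) {m : ℕ}
    (hm : ∀ z, {i ∈ (S : Set ι) | z ∈ C i}.encard ≤ m) {T : Finset κ} (hT : T.Nonempty) :
    ∃ h : ι → κ, (∀ i, h i ∈ T) ∧
      μ (collisionSet S h B C) ≤ m * (∑ i ∈ S, μ (B i)) / T.card := by
  classical
  obtain ⟨h, hT_mem, hle⟩ :=
    exists_coloring_sum_offDiag_le hT (fun p : ι × ι => μ (B p.1 ∩ C p.2)) S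
  have hsub : collisionSet S h B C ⊆
      ⋃ p ∈ S.offDiag, if h p.1 = h p.2 then B p.1 ∩ C p.2 else ∅ := by
    rintro z ⟨i, hi, j, hj, hij, heq, hz⟩
    refine Set.mem_biUnion (x := (i, j)) (Finset.mem_offDiag.2 ⟨hi, hj, hij⟩) ?_
    rwa [if_pos heq]
  refine ⟨h, hT_mem, ?_⟩
  calc μ (collisionSet S h B C)
      ≤ ∑ p ∈ S.offDiag, μ (if h p.1 = h p.2 then B p.1 ∩ C p.2 else ∅) :=
        (measure_mono hsub).trans (measure_biUnion_finset_le _ _)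
    _ = ∑ p ∈ S.offDiag, (if h p.1 = h p.2 then μ (B p.1 ∩ C p.2) else 0) := by
        simp only [apply_ite μ, measure_empty]
    _ ≤ (∑ p ∈ S.offDiag, μ (B p.1 ∩ C p.2)) / T.card := hle
    _ ≤ (m * ∑ i ∈ S, μ (B i)) / T.card := by
        gcongr
        calc ∑ p ∈ S.offDiag, μ (B p.1 ∩ C p.2) ≤ ∑ p ∈ S ×ˢ S, μ (B p.1 ∩ C p.2) :=
              Finset.sum_le_sum_of_subset fun p hp => by
                obtain ⟨hp₁, hp₂, -⟩ := Finset.mem_offDiag.1 hp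
                exact Finset.mem_product.2 ⟨hp₁, hp₂⟩
          _ = ∑ i ∈ S, ∑ j ∈ S, μ (B i ∩ C j) := Finset.sum_product _ _ _
          _ ≤ ∑ i ∈ S, m * μ (B i) :=
              Finset.sum_le_sum fun i _ => sum_measure_inter_le μ hC hm (B i)
          _ = m * ∑ i ∈ S, μ (B i) := (Finset.mul_sum _ _ _).symm

end Collisions

section Atoms

variable {X Y : Type*}

/-- The points `(x, y)` for which every point of `A` is a candidate for the first coordinate given
`y`, that is, `A` lies in the fibre of `G` over `y`. -/
def candidateAtom (G : Set (X × Y)) (A : Set X) : Set (X × Y) :=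
  {p | A ⊆ (·, p.2) ⁻¹' G}

variable [MeasurableSpace X]

lemma mem_measurableAtom_comm {x y : X} : x ∈ measurableAtom y ↔ y ∈ measurableAtom x :=
  ⟨fun h => measurableAtom_eq_of_mem h ▸ mem_measurableAtom_self y,
    fun h => measurableAtom_eq_of_mem h ▸ mem_measurableAtom_self x⟩

lemma measurable_measurableAtom [Countable X] : Measurable (measurableAtom : X → Set X) := by
  refine measurable_set_iff.2 fun a => measurableSet_setOfPred.1 ?_
  simpa only [mem_measurableAtom_comm (x := a)] using!
    MeasurableSet.measurableAtom_of_countable a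

variable (X) in
/-- The measurable atoms of `X` with between `2 ^ j` and `2 ^ (j + 1) - 1` points. -/
def atomsOfLevel [Finite X] (j : ℕ) : Finset (Set X) :=
  {A ∈ (Set.finite_range (measurableAtom : X → Set X)).toFinset | Nat.log 2 A.ncard = j}

lemma mem_atomsOfLevel [Finite X] {A : Set X} {j : ℕ} :
    A ∈ atomsOfLevel X j ↔ (∃ x, measurableAtom x = A) ∧ Nat.log 2 A.ncard = j := by
  simp only [atomsOfLevel, Finset.mem_filter, Set.Finite.mem_toFinset, Set.mem_range]

lemma encard_atomsOfLevel_subset_le [Finite X] (j : ℕ) (s : Set X) :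
    {A ∈ (atomsOfLevel X j : Set (Set X)) | A ⊆ s}.encard ≤ (s.ncard / 2 ^ j : ℕ) := by
  classical
  have := Fintype.ofFinite X
  have hcard : 2 ^ j * ({A ∈ atomsOfLevel X j | A ⊆ s}).card ≤ s.ncard := by
    let covered : Finset X := {x | measurableAtom x ∈ atomsOfLevel X j ∧ measurableAtom x ⊆ s}
    have hcovered : (covered : Set X) ⊆ s := fun x hx =>
      (Finset.mem_filter.1 (Finset.mem_coe.1 hx)).2.2 (mem_measurableAtom_self x)
    refine (Finset.mul_card_image_le_card_of_maps_to (f := measurableAtom) (s := covered)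
      (fun x hx => Finset.mem_filter.2 (Finset.mem_filter.1 hx).2) _ fun A hA => ?_).trans
      ((Set.ncard_coe_finset covered).symm.trans_le (Set.ncard_le_ncard hcovered))
    obtain ⟨hAj, hAs⟩ := Finset.mem_filter.1 hA
    obtain ⟨⟨x, rfl⟩, rfl⟩ := mem_atomsOfLevel.1 hAj
    have hne : (measurableAtom x).ncard ≠ 0 :=
      Set.ncard_ne_zero_of_mem (mem_measurableAtom_self x)
    refine (Nat.pow_log_le_self 2 hne).trans ?_
    rw [← Set.ncard_coe_finset]
    refine Set.ncard_le_ncard fun z hz => ?_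
    have hzx : measurableAtom z = measurableAtom x := measurableAtom_eq_of_mem hz
    refine Finset.mem_filter.2 ⟨Finset.mem_filter.2 ⟨Finset.mem_univ z, ?_⟩, hzx⟩
    rw [hzx]
    exact ⟨hAj, hAs⟩
  have hcoe : {A ∈ (atomsOfLevel X j : Set (Set X)) | A ⊆ s}
      = ({A ∈ atomsOfLevel X j | A ⊆ s} : Finset (Set X)) := by
    simp only [Finset.coe_filter, Finset.mem_coe]
  rw [hcoe, Set.encard_coe_eq_coe_finsetCard, Nat.cast_le, Nat.le_div_iff_mul_le (by positivity)]
  rwa [mul_comm]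

lemma exists_index_injOn_measurableAtom (X : Type*) [Finite X] [MeasurableSpace X] :
    ∃ index : X → ℕ, (∀ x, index x < (measurableAtom x).ncard) ∧
      ∀ x, Set.InjOn index (measurableAtom x) := by
  have hatom (A : Set X) : ∃ g : X → ℕ, A ⊆ g ⁻¹' Set.Iio A.ncard ∧ Set.InjOn g A := by
    refine A.toFinite.exists_injOn_of_encard_le ?_
    rw [← A.toFinite.cast_ncard_eq, ← (Set.finite_Iio A.ncard).cast_ncard_eq, Set.ncard_Iio_nat]
  choose g hlt hinj using hatom
  refine ⟨fun x => g (measurableAtom x) x, fun x => hlt _ (mem_measurableAtom_self x), ?_⟩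
  intro x y hy z hz hyz
  simp only [measurableAtom_eq_of_mem hy, measurableAtom_eq_of_mem hz] at hyz
  exact hinj _ hy hz hyz

/-- The points of `G` whose first coordinate lies in the atom `A`. -/
def overAtom (G : Set (X × Y)) (A : Set X) : Set (X × Y) :=
  G ∩ (fun p => measurableAtom p.1) ⁻¹' {A}

variable [MeasurableSpace Y] {G : Set (X × Y)}

lemma measurableSet_candidateAtom [Countable X] (hG : MeasurableSet G) (A : Set X) :
    MeasurableSet (candidateAtom G A) := by
  have heq : candidateAtom G A = ⋂ x ∈ A, Prod.snd ⁻¹' (Prod.mk x ⁻¹' G) := by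
    ext p
    simp only [candidateAtom, Set.subset_def, Set.mem_iInter, Set.mem_preimage,
      Set.mem_ofPred_eq]
  rw [heq]
  exact MeasurableSet.biInter A.to_countable fun x _ =>
    measurable_snd (measurable_prodMk_left hG)

lemma mem_candidateAtom (hG : MeasurableSet G) {x x' : X} {y : Y} (hx' : (x', y) ∈ G) :
    (x, y) ∈ candidateAtom G (measurableAtom x') :=
  measurableAtom_subset (measurable_prodMk_right hG) hx'

lemma sum_measure_overAtom_le [Finite X] (μ : Measure (X × Y)) (G : Set (X × Y)) (J : Finset ℕ) :
    ∑ j ∈ J, ∑ A ∈ atomsOfLevel X j, μ (overAtom G A) ≤ μ G := by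
  have hmeas (A : Set X) : MeasurableSet ((fun p : X × Y => measurableAtom p.1) ⁻¹' {A}) :=
    (measurable_measurableAtom.comp measurable_fst) (measurableSet_singleton A)
  let atoms := (Set.finite_range (measurableAtom : X → Set X)).toFinset
  calc ∑ j ∈ J, ∑ A ∈ atomsOfLevel X j, μ (overAtom G A)
      ≤ ∑ A ∈ atoms, μ (overAtom G A) := by
        simp only [atomsOfLevel]
        exact Finset.sum_fiberwise_le_sum_of_sum_fiber_nonneg fun _ _ => zero_le
    _ = ∑ A ∈ atoms, μ.restrict G ((fun p => measurableAtom p.1) ⁻¹' {A}) :=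
        Finset.sum_congr rfl fun A _ => by
          rw [Measure.restrict_apply (hmeas A), overAtom, Set.inter_comm]
    _ = μ.restrict G ((fun p => measurableAtom p.1) ⁻¹' atoms) :=
        sum_measure_preimage_singleton atoms fun A _ => hmeas A
    _ ≤ μ G := (measure_mono (Set.subset_univ _)).trans_eq (Measure.restrict_apply_univ _)


lemma exists_coloring_atomsOfLevel [Finite X] (μ : Measure (X × Y)) (hG : MeasurableSet G)
    {M : ℕ} (hM : ∀ y, ((·, y) ⁻¹' G).ncard ≤ M) {K : ℕ} (hK : K ≠ 0) {j : ℕ} (hj : 2 ^ j ≤ M) :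
    ∃ h : Set X → ℕ, (∀ A, h A < K * (M / 2 ^ j)) ∧
      μ (collisionSet (atomsOfLevel X j) h (overAtom G) (candidateAtom G)) ≤
        (∑ A ∈ atomsOfLevel X j, μ (overAtom G A)) / K := by
  have hm : M / 2 ^ j ≠ 0 := (Nat.div_pos hj (by positivity)).ne'
  have hcandidates (p : X × Y) :
      {A ∈ (atomsOfLevel X j : Set (Set X)) | p ∈ candidateAtom G A}.encard
        ≤ (M / 2 ^ j : ℕ) :=
    (encard_atomsOfLevel_subset_le j _).trans
      (Nat.cast_le.2 (Nat.div_le_div_right (hM p.2)))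
  obtain ⟨h, hlt, hle⟩ := exists_coloring_measure_collisionSet_le μ (atomsOfLevel X j)
    (overAtom G) (measurableSet_candidateAtom hG) hcandidates
    (Finset.nonempty_range_iff.2 (mul_ne_zero hK hm))
  refine ⟨h, fun A => Finset.mem_range.1 (hlt A), hle.trans_eq ?_⟩
  rw [Finset.card_range, mul_comm K, Nat.cast_mul, ENNReal.mul_div_mul_left _ _
    (by exact_mod_cast hm) (ENNReal.natCast_ne_top _)]

end Atoms

section Binning

/-- The codewords of the binning encoder: the level of the atom of the letter, the colour of that
atom among `K * (M / 2 ^ j)` colours, and the index of the letter inside its atom. -/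
def binningCodewords (K M : ℕ) : Finset (Σ _ : ℕ, ℕ × ℕ) :=
  (Finset.range (Nat.log 2 M + 1)).sigma fun j =>
    Finset.range (K * (M / 2 ^ j)) ×ˢ Finset.range (2 ^ (j + 1))

lemma card_binningCodewords_le (K M : ℕ) :
    (binningCodewords K M).card ≤ (Nat.log 2 M + 1) * (2 * K * M) := by
  rw [binningCodewords, Finset.card_sigma]
  refine (Finset.sum_le_card_nsmul _ _ (2 * K * M) fun j _ => ?_).trans_eq
    (by rw [Finset.card_range, smul_eq_mul])
  calc (Finset.range (K * (M / 2 ^ j)) ×ˢ Finset.range (2 ^ (j + 1))).card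
      = 2 * K * (M / 2 ^ j * 2 ^ j) := by
        rw [Finset.card_product, Finset.card_range, Finset.card_range]; ring
    _ ≤ 2 * K * M := Nat.mul_le_mul_left _ (Nat.div_mul_le_self M _)

variable {X Y : Type*} [MeasurableSpace X]

/-- The encoder of random binning: it describes a letter by the level of its atom, the colour of
the atom under the colouring `h` of that level, and the index of the letter. -/
def binningEncoder (h : ℕ → Set X → ℕ) (index : X → ℕ) (x : X) : Σ _ : ℕ, ℕ × ℕ :=
  ⟨Nat.log 2 (measurableAtom x).ncard,
    h (Nat.log 2 (measurableAtom x).ncard) (measurableAtom x), index x⟩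

variable [Finite X] [MeasurableSpace Y] {G : Set (X × Y)}

lemma log_ncard_measurableAtom_le (hG : MeasurableSet G) {M : ℕ}
    (hM : ∀ y, ((·, y) ⁻¹' G).ncard ≤ M) {p : X × Y} (hp : p ∈ G) :
    Nat.log 2 (measurableAtom p.1).ncard ≤ Nat.log 2 M :=
  Nat.log_mono_right <| (Set.ncard_le_ncard (mem_candidateAtom hG (x := p.1) hp)).trans (hM p.2)

lemma binningEncoder_mem_binningCodewords (hG : MeasurableSet G) {M K : ℕ}
    (hM : ∀ y, ((·, y) ⁻¹' G).ncard ≤ M) {h : ℕ → Set X → ℕ}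
    (hlt : ∀ j ≤ Nat.log 2 M, ∀ A, h j A < K * (M / 2 ^ j)) {index : X → ℕ}
    (hindex : ∀ x, index x < (measurableAtom x).ncard) {p : X × Y} (hp : p ∈ G) :
    binningEncoder h index p.1 ∈ binningCodewords K M := by
  have hlevel : Nat.log 2 (measurableAtom p.1).ncard ≤ Nat.log 2 M :=
    log_ncard_measurableAtom_le hG hM hp
  refine Finset.mem_sigma.2 ⟨Finset.mem_range.2 (Nat.lt_succ_of_le hlevel),
    Finset.mem_product.2 ⟨Finset.mem_range.2 (hlt _ hlevel _), Finset.mem_range.2 ?_⟩⟩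
  exact (hindex p.1).trans (Nat.lt_pow_succ_log_self one_lt_two _)

lemma injOn_binningEncoder (hG : MeasurableSet G) {M : ℕ}
    (hM : ∀ y, ((·, y) ⁻¹' G).ncard ≤ M) (h : ℕ → Set X → ℕ) {index : X → ℕ}
    (hinj : ∀ x, Set.InjOn index (measurableAtom x)) (y : Y) :
    Set.InjOn (binningEncoder h index)
      ((·, y) ⁻¹' (G \ ⋃ j ∈ Finset.range (Nat.log 2 M + 1),
        collisionSet (atomsOfLevel X j) (h j) (overAtom G) (candidateAtom G))) := by
  rintro x ⟨hx, hx_free⟩ x' ⟨hx', -⟩ heq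
  simp only [binningEncoder, Sigma.mk.injEq, heq_eq_eq, Prod.mk.injEq] at heq
  obtain ⟨hlevel, hcolor, hindex⟩ := heq
  by_cases hatom : measurableAtom x = measurableAtom x'
  · exact hinj x (mem_measurableAtom_self x) (hatom ▸ mem_measurableAtom_self x') hindex
  have hcollision : (x, y) ∈ collisionSet (atomsOfLevel X (Nat.log 2 (measurableAtom x).ncard))
      (h (Nat.log 2 (measurableAtom x).ncard)) (overAtom G) (candidateAtom G) :=
    ⟨measurableAtom x, mem_atomsOfLevel.2 ⟨⟨x, rfl⟩, rfl⟩,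
      measurableAtom x', mem_atomsOfLevel.2 ⟨⟨x', rfl⟩, hlevel.symm⟩,
      hatom, hcolor.trans (by rw [hlevel]), ⟨hx, rfl⟩, mem_candidateAtom hG hx'⟩
  exact absurd (Set.mem_iUnion₂.2 ⟨_, Finset.mem_range.2 <| Nat.lt_succ_of_le <|
    log_ncard_measurableAtom_le hG hM (p := (x, y)) hx, hcollision⟩) hx_free

theorem exists_binningEncoder_injOn (μ : Measure (X × Y)) (hG : MeasurableSet G) {M K : ℕ}
    (hM : ∀ y, ((·, y) ⁻¹' G).ncard ≤ M) (hM₀ : M ≠ 0) (hK : K ≠ 0) :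
    ∃ (f : X → Σ _ : ℕ, ℕ × ℕ) (E : Set (X × Y)), μ E ≤ μ G / K ∧
      (∀ p ∈ G, f p.1 ∈ binningCodewords K M) ∧
      ∀ y, Set.InjOn f ((·, y) ⁻¹' (G \ E)) := by
  obtain ⟨index, hindex, hinj⟩ := exists_index_injOn_measurableAtom X
  have hcoloring (j : ℕ) : ∃ h : Set X → ℕ, j ≤ Nat.log 2 M →
      (∀ A, h A < K * (M / 2 ^ j)) ∧
      μ (collisionSet (atomsOfLevel X j) h (overAtom G) (candidateAtom G)) ≤
        (∑ A ∈ atomsOfLevel X j, μ (overAtom G A)) / K := by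
    by_cases hj : j ≤ Nat.log 2 M
    · obtain ⟨h, hh⟩ :=
        exists_coloring_atomsOfLevel μ hG hM hK (Nat.pow_le_of_le_log hM₀ hj)
      exact ⟨h, fun _ => hh⟩
    · exact ⟨0, fun h => absurd h hj⟩
  choose h hh using hcoloring
  refine ⟨binningEncoder h index, _, ?_,
    fun p => binningEncoder_mem_binningCodewords hG hM (fun j hj => (hh j hj).1) hindex,
    injOn_binningEncoder hG hM h hinj⟩
  refine (measure_biUnion_finset_le _ _).trans ?_
  refine (Finset.sum_le_sum fun j hj =>
    (hh j (Nat.le_of_lt_succ (Finset.mem_range.1 hj))).2).trans ?_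
  simp only [div_eq_mul_inv, ← Finset.sum_mul]
  gcongr
  exact sum_measure_overAtom_le μ G _

end Binning

section Codes

variable {X Y : Type}

lemma ACode.ncard_fiber_T_le (c : ACode X Y) (y : Y) : ((·, y) ⁻¹' c.T).ncard ≤ c.M := by
  have hinj : Set.InjOn (fun x => c.enc (x, y)) ((·, y) ⁻¹' c.T) := by
    intro x hx x' hx' heq
    have hx_dec : c.dec (c.enc (x, y), y) = x := hx
    have hx'_dec : c.dec (c.enc (x', y), y) = x' := hx'
    exact hx_dec.symm.trans ((congrArg (fun i => c.dec (i, y)) heq).trans hx'_dec)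
  rw [← hinj.ncard_image]
  exact (Set.ncard_le_card _).trans_eq (Nat.card_fin _)

lemma exists_bCode_subset_T [Nonempty X] {γ : Type*} (f : X → γ) {W : Finset γ} {N : ℕ}
    (hN : 1 ≤ N) (hW : W.card ≤ N) {D : Set (X × Y)} (hmem : ∀ p ∈ D, f p.1 ∈ W)
    (hinj : ∀ y, Set.InjOn f ((·, y) ⁻¹' D)) :
    ∃ d : BCode X Y, d.M = N ∧ D ⊆ d.T := by
  have := NeZero.of_pos (Nat.lt_of_succ_le hN)
  obtain ⟨label, -, hlabel⟩ : ∃ label : γ → Fin N, (W : Set γ) ⊆ label ⁻¹' Set.univ ∧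
      Set.InjOn label W := by
    refine W.finite_toSet.exists_injOn_of_encard_le ?_
    simpa using hW
  have hinj_label (y : Y) : Set.InjOn (label ∘ f) ((·, y) ⁻¹' D) :=
    hlabel.comp (hinj y) fun x hx => hmem (x, y) hx
  exact ⟨⟨N, hN, label ∘ f, fun q => Function.invFunOn (label ∘ f) ((·, q.2) ⁻¹' D) q.1⟩, rfl,
    fun p hp => (hinj_label p.2).leftInvOn_invFunOn hp⟩

theorem exists_bCode_measure_compl_T_le [Finite X] [Nonempty X] [MeasurableSpace X]
    [MeasurableSpace Y] (μ : Measure (X × Y)) (c : ACode X Y) {K : ℕ} (hK : K ≠ 0) :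
    ∃ d : BCode X Y, d.M = (Nat.log 2 c.M + 1) * (2 * K * c.M) ∧
      μ d.Tᶜ ≤ μ c.Tᶜ + μ Set.univ / K := by
  -- `c.T` need not be measurable.
  let G := (toMeasurable μ c.Tᶜ)ᶜ
  have hG : MeasurableSet G := (measurableSet_toMeasurable μ _).compl
  have hGT : G ⊆ c.T := Set.compl_subset_comm.1 (subset_toMeasurable μ _)
  have hfiber (y : Y) : ((·, y) ⁻¹' G).ncard ≤ c.M :=
    (Set.ncard_le_ncard (Set.preimage_mono hGT)).trans (c.ncard_fiber_T_le y)
  have hM : 0 < c.M := c.hM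
  obtain ⟨f, E, hE, hmem, hinj⟩ := exists_binningEncoder_injOn μ hG hfiber hM.ne' hK
  obtain ⟨d, hd, hsub⟩ := exists_bCode_subset_T f (Nat.one_le_iff_ne_zero.2 (by positivity))
    (card_binningCodewords_le K c.M) (fun p (hp : p ∈ G \ E) => hmem p hp.1) hinj
  refine ⟨d, hd, ?_⟩
  calc μ d.Tᶜ ≤ μ (toMeasurable μ c.Tᶜ ∪ E) := by
        refine measure_mono ((Set.compl_subset_compl.2 hsub).trans_eq ?_)
        rw [Set.sdiff_eq, Set.compl_inter, compl_compl, compl_compl]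
    _ ≤ μ (toMeasurable μ c.Tᶜ) + μ E := measure_union_le _ _
    _ ≤ μ c.Tᶜ + μ Set.univ / K := by
        rw [measure_toMeasurable]
        gcongr
        exact hE.trans (by gcongr; exact Set.subset_univ _)

lemma exists_aCode_compl_T_subset {ι : Type*} [Fintype ι] [Nonempty ι] (c : ι → BCode X Y) :
    ∃ d : ACode X Y, d.M = ∑ i, (c i).M ∧ d.Tᶜ ⊆ ⋂ i, (c i).Tᶜ := by
  classical
  have hchoice (p : X × Y) : ∃ i, p ∈ ⋃ j, (c j).T → p ∈ (c i).T := by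
    by_cases hp : p ∈ ⋃ j, (c j).T
    · exact (Set.mem_iUnion.1 hp).imp fun i hi _ => hi
    · exact ⟨Classical.arbitrary ι, fun h => absurd h hp⟩
  choose choice hchoice using hchoice
  let e : (Σ i, Fin (c i).M) ≃ Fin (∑ i, (c i).M) :=
    Fintype.equivFinOfCardEq (by simp only [Fintype.card_sigma, Fintype.card_fin])
  have hM : 1 ≤ ∑ i, (c i).M :=
    (c (Classical.arbitrary ι)).hM.trans
      (Finset.single_le_sum (f := fun i => (c i).M) (fun _ _ => Nat.zero_le _) (Finset.mem_univ _))
  refine ⟨⟨_, hM, fun p => e ⟨choice p, (c (choice p)).enc p.1⟩,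
    fun q => (c (e.symm q.1).1).dec ((e.symm q.1).2, q.2)⟩, rfl, ?_⟩
  rw [← Set.compl_iUnion, Set.compl_subset_compl]
  intro p hp
  have hdec (a : Σ i, Fin (c i).M) :
      (c (e.symm (e a)).1).dec ((e.symm (e a)).2, p.2) = (c a.1).dec (a.2, p.2) := by
    rw [e.symm_apply_apply]
  exact (hdec _).trans (hchoice p hp)

end Codes

section Rates

/-- The sequence `a` is subexponential in the sense that `(1/n) log a n` tends to `0`; multiplying
code sizes by `a` does not change their rate. -/
def IsSubexponential (a : ℕ → ℝ) : Prop :=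
  Tendsto (fun n : ℕ => (n : ℝ)⁻¹ * Real.log (a n)) atTop (𝓝 0)

lemma isSubexponential_const_mul_rpow {C : ℝ} (hC : 0 < C) (p : ℝ) :
    IsSubexponential fun n => C * (n : ℝ) ^ p := by
  have hconst : Tendsto (fun n : ℕ => (n : ℝ)⁻¹ * Real.log C) atTop (𝓝 (0 * Real.log C)) :=
    tendsto_inv_atTop_nhds_zero_nat.mul_const _
  have hlog : Tendsto (fun n : ℕ => p * (Real.log n / n)) atTop (𝓝 (p * 0)) :=
    (Real.isLittleO_log_id_atTop.tendsto_div_nhds_zero.comp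
      tendsto_natCast_atTop_atTop).const_mul p
  rw [zero_mul] at hconst
  rw [mul_zero] at hlog
  refine ((hconst.add hlog).congr' ?_).trans_eq (by rw [add_zero])
  filter_upwards [eventually_gt_atTop 0] with n hn
  have hn' : (0 : ℝ) < n := by exact_mod_cast hn
  rw [Real.log_mul hC.ne' (by positivity), Real.log_rpow hn']
  ring

lemma IsSubexponential.mono {a b : ℕ → ℝ} (hb : IsSubexponential b)
    (ha : ∀ᶠ n in atTop, 1 ≤ a n) (hab : ∀ᶠ n in atTop, a n ≤ b n) : IsSubexponential a := by
  refine tendsto_of_tendsto_of_tendsto_of_le_of_le' tendsto_const_nhds hb ?_ ?_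
  · filter_upwards [ha] with n hn
    exact mul_nonneg (by positivity) (Real.log_nonneg hn)
  · filter_upwards [ha, hab] with n hn hle
    gcongr

lemma isSubexponential_add_one_of_le_rpow {k : ℕ → ℕ} {s : ℝ} (hs : 0 ≤ s)
    (hk : ∀ n : ℕ, (k n : ℝ) ≤ (n : ℝ) ^ s) : IsSubexponential fun n => k n + 1 := by
  refine (isSubexponential_const_mul_rpow two_pos s).mono
    (Eventually.of_forall fun n => le_add_of_nonneg_left (Nat.cast_nonneg _)) ?_
  filter_upwards [eventually_ge_atTop 1] with n hn
  have hpow : (1 : ℝ) ≤ (n : ℝ) ^ s := Real.one_le_rpow (by exact_mod_cast hn) hs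
  linarith [hk n]

lemma IsSubexponential.limsup_log_le {a u v : ℕ → ℝ} (ha : IsSubexponential a)
    (hv : ∀ᶠ n in atTop, 0 < v n) (hle : ∀ᶠ n in atTop, v n ≤ a n * u n) :
    limsup (fun n : ℕ => (((n : ℝ)⁻¹ * Real.log (v n) : ℝ) : EReal)) atTop ≤
      limsup (fun n : ℕ => (((n : ℝ)⁻¹ * Real.log (u n) : ℝ) : EReal)) atTop := by
  have ha' : limsup (fun n : ℕ => (((n : ℝ)⁻¹ * Real.log (a n) : ℝ) : EReal)) atTop = 0 :=
    ((continuous_coe_real_ereal.tendsto 0).comp ha).limsup_eq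
  calc _ ≤ limsup ((fun n : ℕ => (((n : ℝ)⁻¹ * Real.log (a n) : ℝ) : EReal)) +
        fun n : ℕ => (((n : ℝ)⁻¹ * Real.log (u n) : ℝ) : EReal)) atTop := by
        refine limsup_le_limsup ?_
        filter_upwards [hv, hle] with n hn hle
        have hau : a n * u n ≠ 0 := (hn.trans_le hle).ne'
        rw [Pi.add_apply, ← EReal.coe_add, EReal.coe_le_coe_iff, ← mul_add,
          ← Real.log_mul (left_ne_zero_of_mul hau) (right_ne_zero_of_mul hau)]
        gcongr
    _ ≤ _ + _ := EReal.limsup_add_le (by rw [ha']; simp) (by rw [ha']; simp)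
    _ = _ := by rw [ha', zero_add]

lemma eventually_log_le_of_limsup_lt {u : ℕ → ℝ} {R : ℝ}
    (hu : limsup (fun n : ℕ => (((n : ℝ)⁻¹ * Real.log (u n) : ℝ) : EReal)) atTop < R) :
    ∀ᶠ n : ℕ in atTop, Real.log (u n) ≤ R * n := by
  filter_upwards [eventually_lt_of_limsup_lt hu, eventually_gt_atTop 0] with n hlt hn
  have hn' : (0 : ℝ) < n := by exact_mod_cast hn
  rw [EReal.coe_lt_coe_iff, inv_mul_lt_iff₀ hn', mul_comm] at hlt
  exact hlt.le

lemma isSubexponential_natLog_add_one_mul {M : ℕ → ℕ} {R : ℝ}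
    (hM : limsup (fun n : ℕ => (((n : ℝ)⁻¹ * Real.log (M n) : ℝ) : EReal)) atTop ≤ R) :
    IsSubexponential fun n => ((Nat.log 2 (M n) : ℝ) + 1) * (2 * (n + 1)) := by
  let C := (|R| + 1) / Real.log 2 + 1
  refine (isSubexponential_const_mul_rpow (C := 4 * C) (by positivity) 2).mono
    (Eventually.of_forall fun n => ?_) ?_
  · refine one_le_mul_of_one_le_of_one_le (le_add_of_nonneg_left (Nat.cast_nonneg _)) ?_
    linarith [n.cast_nonneg (α := ℝ)]
  have hlt : limsup (fun n : ℕ => (((n : ℝ)⁻¹ * Real.log (M n) : ℝ) : EReal)) atTop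
      < ((|R| + 1 : ℝ) : EReal) :=
    hM.trans_lt (EReal.coe_lt_coe_iff.2 ((le_abs_self R).trans_lt (lt_add_one _)))
  filter_upwards [eventually_log_le_of_limsup_lt hlt, eventually_ge_atTop 1] with n hlog hn
  have hn' : (1 : ℝ) ≤ n := by exact_mod_cast hn
  have hlog₂ : (Nat.log 2 (M n) : ℝ) ≤ (|R| + 1) / Real.log 2 * n := by
    refine (Real.natLog_le_logb _ _).trans ?_
    rw [Nat.cast_ofNat, Real.logb, div_mul_eq_mul_div]
    gcongr
  calc ((Nat.log 2 (M n) : ℝ) + 1) * (2 * (n + 1)) ≤ (C * n) * (2 * (n + n)) := by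
        gcongr
        linarith
    _ = 4 * C * (n : ℝ) ^ (2 : ℝ) := by rw [Real.rpow_two]; ring

end Rates

section ErrorProbabilities

variable {X1 X2 : ℕ → Type} [∀ n, MeasurableSpace (X1 n)] [∀ n, MeasurableSpace (X2 n)]

lemma epsA_le_epsBMulti (μ : ∀ n, Measure (X1 n × X2 n)) (R : ℝ) {k : ℕ → ℕ}
    (hk : IsSubexponential fun n => k n + 1) : epsA μ R ≤ epsBMulti k μ R := by
  refine le_iInf₂ fun c hc => ?_
  choose d hdM hdT using fun n => exists_aCode_compl_T_subset (c n)
  refine iInf₂_le_of_le d ?_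
    (limsup_le_limsup (Eventually.of_forall fun n => measure_mono (hdT n)))
  refine (hk.limsup_log_le (Eventually.of_forall fun n => by exact_mod_cast (d n).hM)
    (Eventually.of_forall fun n => ?_)).trans hc
  calc ((d n).M : ℝ) = ∑ i, ((c n i).M : ℝ) := by rw [hdM n, Nat.cast_sum]
    _ ≤ ∑ _i : Fin (k n + 1), ⨆ i, ((c n i).M : ℝ) :=
        Finset.sum_le_sum fun i _ =>
          le_ciSup (f := fun i => ((c n i).M : ℝ)) (Set.finite_range _).bddAbove i
    _ = (k n + 1) * ⨆ i, ((c n i).M : ℝ) := by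
        rw [Fin.sum_const, nsmul_eq_mul, Nat.cast_add_one]

lemma epsBMulti_le_epsA [∀ n, Finite (X1 n)] (μ : ∀ n, Measure (X1 n × X2 n))
    [∀ n, IsProbabilityMeasure (μ n)] (R : ℝ) (k : ℕ → ℕ) :
    epsBMulti k μ R ≤ epsA μ R := by
  have (n : ℕ) : Nonempty (X1 n) := (nonempty_of_isProbabilityMeasure (μ n)).map Prod.fst
  refine le_iInf₂ fun c hc => ?_
  choose d hdM hdT using fun n =>
    exists_bCode_measure_compl_T_le (μ n) (c n) (Nat.succ_ne_zero n)
  refine iInf₂_le_of_le (fun n _ => d n) ?_ ?_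
  · simp only [rateBMulti, ciSup_const]
    refine ((isSubexponential_natLog_add_one_mul hc).limsup_log_le
      (Eventually.of_forall fun n => by exact_mod_cast (d n).hM)
      (Eventually.of_forall fun n => ?_)).trans hc
    rw [hdM n]
    push_cast
    exact (mul_assoc _ _ _).ge
  · have hzero : Tendsto (fun n : ℕ => μ n Set.univ / (n + 1 : ℕ)) atTop (𝓝 0) := by
      simp only [measure_univ, one_div]
      exact ENNReal.tendsto_inv_nat_nhds_zero.comp (tendsto_add_atTop_nat 1)
    refine le_trans (limsup_le_limsup (Eventually.of_forall fun n => ?_))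
      (ENNReal.limsup_add_of_right_tendsto_zero hzero _).le
    exact (measure_mono (Set.iInter_subset _ 0)).trans (hdT n)

theorem statement1_general [∀ n, Finite (X1 n)] (μ : ∀ n, Measure (X1 n × X2 n))
    [∀ n, IsProbabilityMeasure (μ n)] (R : ℝ) {k : ℕ → ℕ}
    (hk : IsSubexponential fun n => k n + 1) : epsA μ R = epsBMulti k μ R :=
  (epsA_le_epsBMulti μ R hk).antisymm (epsBMulti_le_epsA μ R k)

end ErrorProbabilities

theorem statement1
    (X1 X2 : ℕ → Type)
    [∀ n, Fintype (X1 n)] [∀ n, Nonempty (X1 n)]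
    [∀ n, Fintype (X2 n)] [∀ n, Nonempty (X2 n)]
    [∀ n, MeasurableSpace (X1 n)] [∀ n, MeasurableSpace (X2 n)]
    (μ : ∀ n, Measure (X1 n × X2 n)) (hμ : ∀ n, IsProbabilityMeasure (μ n))
    (R s : ℝ) (hR : 0 < R) (hs : 0 < s)
    (k : ℕ → ℕ) (hk : ∀ n : ℕ, (k n : ℝ) ≤ (n : ℝ) ^ s) :
    epsA μ R = epsBMulti k μ R :=
  statement1_general μ R (isSubexponential_add_one_of_le_rpow hs.le hk)

end
end

section
/- Suppose the system (C_n, ‖·‖, T_n) is subadditive. Then for any source μ, any real numbers R and s, and any sequence (k_n) of nonnegative integers with k_n ≤ n^s for all n, the single-code and multi-code quantities coincide: ε_C(R|μ) = ε_C(R|μ; (k_n)) and ρ_C(R|μ) = ρ_C(R|μ; (k_n)). -/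
open MeasureTheory Filter Topology
open scoped ENNReal

noncomputable section

/-- Rate of a code sequence: `limsup (1/n) log ‖c_n‖`. -/
def rate {C : ℕ → Type} (size : ∀ n, C n → ℝ) (c : ∀ n, C n) : EReal :=
  Filter.limsup (fun n : ℕ => (((n : ℝ)⁻¹ * Real.log (size n (c n)) : ℝ) : EReal)) Filter.atTop

/-- `ε_C(R|μ)`: infimum over code sequences of rate at most `R` of the limsup of the
error probabilities. -/
def epsC {Ω : ℕ → Type} [∀ n, MeasurableSpace (Ω n)] {C : ℕ → Type}
    (size : ∀ n, C n → ℝ) (T : ∀ n, C n → Set (Ω n)) (μ : ∀ n, Measure (Ω n)) (R : ℝ) :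
    ℝ≥0∞ :=
  ⨅ (c : ∀ n, C n) (_ : rate size c ≤ (R : EReal)),
    Filter.limsup (fun n => μ n (T n (c n))ᶜ) Filter.atTop

/-- `ρ_C(R|μ)`: supremum over code sequences of rate at most `R` of
`liminf (1/n) log (1/μ_n((T_n(c_n))ᶜ))`. -/
def rhoC {Ω : ℕ → Type} [∀ n, MeasurableSpace (Ω n)] {C : ℕ → Type}
    (size : ∀ n, C n → ℝ) (T : ∀ n, C n → Set (Ω n)) (μ : ∀ n, Measure (Ω n)) (R : ℝ) :
    EReal :=
  ⨆ (c : ∀ n, C n) (_ : rate size c ≤ (R : EReal)),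
    Filter.liminf
      (fun n : ℕ => (((n : ℝ)⁻¹ : ℝ) : EReal) * ENNReal.log (μ n (T n (c n))ᶜ)⁻¹)
      Filter.atTop

/-- Rate of a multi-code sequence: `limsup (1/n) log (max_i ‖c_{i,n}‖)`. -/
def rateMulti {C : ℕ → Type} (k : ℕ → ℕ) (size : ∀ n, C n → ℝ)
    (c : ∀ n, Fin (k n + 1) → C n) : EReal :=
  Filter.limsup
    (fun n : ℕ => (((n : ℝ)⁻¹ * Real.log (⨆ i, size n (c n i)) : ℝ) : EReal)) Filter.atTop

/-- `ε_C(R|μ;(k_n))`: infimum over multi-code sequences of rate at most `R` of the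
limsup of the probabilities that all codes err. -/
def epsCMulti {Ω : ℕ → Type} [∀ n, MeasurableSpace (Ω n)] {C : ℕ → Type} (k : ℕ → ℕ)
    (size : ∀ n, C n → ℝ) (T : ∀ n, C n → Set (Ω n)) (μ : ∀ n, Measure (Ω n)) (R : ℝ) :
    ℝ≥0∞ :=
  ⨅ (c : ∀ n, Fin (k n + 1) → C n) (_ : rateMulti k size c ≤ (R : EReal)),
    Filter.limsup (fun n => μ n (⋂ i, (T n (c n i))ᶜ)) Filter.atTop

/-- `ρ_C(R|μ;(k_n))`: supremum over multi-code sequences of rate at most `R` of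
`liminf (1/n) log (1/μ_n(⋂_i (T_n(c_{i,n}))ᶜ))`. -/
def rhoCMulti {Ω : ℕ → Type} [∀ n, MeasurableSpace (Ω n)] {C : ℕ → Type} (k : ℕ → ℕ)
    (size : ∀ n, C n → ℝ) (T : ∀ n, C n → Set (Ω n)) (μ : ∀ n, Measure (Ω n)) (R : ℝ) :
    EReal :=
  ⨆ (c : ∀ n, Fin (k n + 1) → C n) (_ : rateMulti k size c ≤ (R : EReal)),
    Filter.liminf
      (fun n : ℕ => (((n : ℝ)⁻¹ : ℝ) : EReal) * ENNReal.log (μ n (⋂ i, (T n (c n i))ᶜ))⁻¹)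
      Filter.atTop

/-! Both quantities depend on the coding system only through the sequences of error events that
can be attained at rate `R`, so it suffices that codes and multi-codes attain the same ones. A code
is a multi-code with equal entries. Conversely, merging the `k n + 1` codes of a multi-code by
subadditivity intersects their error events and multiplies the largest size by at most `k n + 1`,
which is invisible to the rate because `k` has no exponential growth. -/

open ExpGrowth

section Subadditive

variable {C Ω : Type*} {size : C → ℝ} {T : C → Set Ω}

/-- Subadditivity of the codes of a single length: two codes can be merged into one
which covers the union of their sets and whose size is at most the sum of their sizes. -/
def IsSubadditiveCoding (size : C → ℝ) (T : C → Set Ω) : Prop :=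
  ∀ c₁ c₂ : C, ∃ c : C, size c ≤ size c₁ + size c₂ ∧ T c = T c₁ ∪ T c₂

theorem IsSubadditiveCoding.exists_biUnion (h : IsSubadditiveCoding size T) {ι : Type*}
    {s : Finset ι} (hs : s.Nonempty) (f : ι → C) :
    ∃ c, size c ≤ ∑ i ∈ s, size (f i) ∧ T c = ⋃ i ∈ s, T (f i) := by
  induction hs using Finset.Nonempty.cons_induction with
  | singleton i => exact ⟨f i, by simp⟩
  | cons i s hi _ ih =>
    obtain ⟨c, hc, hTc⟩ := ih
    obtain ⟨d, hd, hTd⟩ := h (f i) c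
    refine ⟨d, ?_, ?_⟩
    · rw [Finset.sum_cons]
      linarith
    · classical rw [hTd, hTc, Finset.cons_eq_insert, Finset.set_biUnion_insert]

theorem IsSubadditiveCoding.exists_iUnion (h : IsSubadditiveCoding size T) {ι : Type*}
    [Fintype ι] [Nonempty ι] (f : ι → C) :
    ∃ c, size c ≤ Fintype.card ι * ⨆ i, size (f i) ∧ T c = ⋃ i, T (f i) := by
  obtain ⟨c, hc, hT⟩ := h.exists_biUnion Finset.univ_nonempty f
  refine ⟨c, hc.trans ?_, by simpa using hT⟩
  have hle (i : ι) : size (f i) ≤ ⨆ j, size (f j) :=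
    le_ciSup (f := fun j => size (f j)) (Set.finite_range _).bddAbove i
  simpa using Finset.sum_le_card_nsmul Finset.univ _ _ fun i _ => hle i

end Subadditive

section Growth

theorem limsup_inv_mul_log_eq_expGrowthSup {a : ℕ → ℝ} (ha : ∀ᶠ n in atTop, 0 < a n) :
    limsup (fun n : ℕ => (((n : ℝ)⁻¹ * Real.log (a n) : ℝ) : EReal)) atTop =
      expGrowthSup fun n => ENNReal.ofReal (a n) := by
  refine limsup_congr (ha.mono fun n hn => ?_)
  rw [ENNReal.log_ofReal_of_pos hn, inv_mul_eq_div, EReal.coe_div, EReal.coe_natCast]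

theorem expGrowthSup_ofReal_natCast_rpow (s : ℝ) :
    expGrowthSup (fun n : ℕ => ENNReal.ofReal ((n : ℝ) ^ s)) = 0 := by
  have hpos : ∀ᶠ n : ℕ in atTop, 0 < (n : ℝ) :=
    (eventually_gt_atTop 0).mono fun n hn => Nat.cast_pos.2 hn
  have hlog : Tendsto (fun n : ℕ => s * (Real.log n / n)) atTop (𝓝 0) := by
    simpa using (Real.isLittleO_log_id_atTop.tendsto_div_nhds_zero.comp
      tendsto_natCast_atTop_atTop).const_mul s
  rw [← limsup_inv_mul_log_eq_expGrowthSup (hpos.mono fun n hn => Real.rpow_pos_of_pos hn s)]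
  refine ((continuous_coe_real_ereal.tendsto 0).comp (hlog.congr' ?_)).limsup_eq
  filter_upwards [hpos] with n hn
  rw [Real.log_rpow hn]
  ring

theorem expGrowthSup_natCast_nonpos_of_le_rpow {s : ℝ} {k : ℕ → ℕ}
    (hk : ∀ n : ℕ, (k n : ℝ) ≤ (n : ℝ) ^ s) : expGrowthSup (fun n => (k n : ℝ≥0∞)) ≤ 0 := by
  rw [← expGrowthSup_ofReal_natCast_rpow s]
  refine expGrowthSup_monotone fun n => ?_
  simpa only [ENNReal.ofReal_natCast] using ENNReal.ofReal_le_ofReal (hk n)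

theorem expGrowthSup_mul_le_of_expGrowthSup_eq_zero {u v : ℕ → ℝ≥0∞} (hu : expGrowthSup u = 0) :
    expGrowthSup (u * v) ≤ expGrowthSup v := by
  simpa [hu] using expGrowthSup_mul_le (u := u) (v := v) (by simp [hu]) (by simp [hu])

theorem expGrowthSup_natCast_add_one {k : ℕ → ℕ}
    (hk : expGrowthSup (fun n => (k n : ℝ≥0∞)) ≤ 0) :
    expGrowthSup (fun n => ((k n + 1 : ℕ) : ℝ≥0∞)) = 0 := by
  have hsum : (fun n => ((k n + 1 : ℕ) : ℝ≥0∞)) = (fun n => (k n : ℝ≥0∞)) + fun _ => 1 := by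
    ext n
    simp
  rw [hsum, expGrowthSup_add, expGrowthSup_const one_ne_zero ENNReal.one_ne_top, sup_eq_right.2 hk]

end Growth

section Codes

variable {Ω C : ℕ → Type} {k : ℕ → ℕ} {size : ∀ n, C n → ℝ} {T : ∀ n, C n → Set (Ω n)}

theorem rateMulti_const (k : ℕ → ℕ) (size : ∀ n, C n → ℝ) (c : ∀ n, C n) :
    rateMulti k size (fun n _ => c n) = rate size c := by
  simp only [rateMulti, rate, ciSup_const]

theorem exists_code_rate_le_rateMulti (hsize : ∀ n (c : C n), 0 < size n c)
    (hsub : ∀ n, IsSubadditiveCoding (size n) (T n))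
    (hk : expGrowthSup (fun n => (k n : ℝ≥0∞)) ≤ 0) (c : ∀ n, Fin (k n + 1) → C n) :
    ∃ d : ∀ n, C n, rate size d ≤ rateMulti k size c ∧ ∀ n, T n (d n) = ⋃ i, T n (c n i) := by
  choose d hd hT using fun n => (hsub n).exists_iUnion (c n)
  have hsup_pos (n : ℕ) : 0 < ⨆ i, size n (c n i) :=
    (hsize n (c n 0)).trans_le <|
      le_ciSup (f := fun i => size n (c n i)) (Set.finite_range _).bddAbove 0
  refine ⟨d, ?_, hT⟩
  calc rate size d
      = expGrowthSup fun n => ENNReal.ofReal (size n (d n)) :=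
        limsup_inv_mul_log_eq_expGrowthSup (.of_forall fun n => hsize n (d n))
    _ ≤ expGrowthSup ((fun n => ((k n + 1 : ℕ) : ℝ≥0∞)) *
          fun n => ENNReal.ofReal (⨆ i, size n (c n i))) := by
        refine expGrowthSup_monotone fun n => ?_
        rw [Pi.mul_apply, ← ENNReal.ofReal_natCast, ← ENNReal.ofReal_mul (Nat.cast_nonneg _)]
        exact ENNReal.ofReal_le_ofReal (by simpa only [Fintype.card_fin] using hd n)
    _ ≤ expGrowthSup fun n => ENNReal.ofReal (⨆ i, size n (c n i)) :=
        expGrowthSup_mul_le_of_expGrowthSup_eq_zero (expGrowthSup_natCast_add_one hk)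
    _ = rateMulti k size c :=
        (limsup_inv_mul_log_eq_expGrowthSup (.of_forall hsup_pos)).symm

/-- The sequences of error events `(T_n(c_n))ᶜ` attained by code sequences of rate at most `R`. -/
def errorEvents (size : ∀ n, C n → ℝ) (T : ∀ n, C n → Set (Ω n)) (R : EReal) :
    Set (∀ n, Set (Ω n)) :=
  (fun c n => (T n (c n))ᶜ) '' {c : ∀ n, C n | rate size c ≤ R}

/-- The sequences of common error events `⋂ i, (T_n(c_{i,n}))ᶜ` attained by multi-code sequences
of rate at most `R`. -/
def errorEventsMulti (k : ℕ → ℕ) (size : ∀ n, C n → ℝ) (T : ∀ n, C n → Set (Ω n)) (R : EReal) :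
    Set (∀ n, Set (Ω n)) :=
  (fun c n => ⋂ i, (T n (c n i))ᶜ) '' {c : ∀ n, Fin (k n + 1) → C n | rateMulti k size c ≤ R}

theorem errorEvents_eq_errorEventsMulti (hsize : ∀ n (c : C n), 0 < size n c)
    (hsub : ∀ n, IsSubadditiveCoding (size n) (T n))
    (hk : expGrowthSup (fun n => (k n : ℝ≥0∞)) ≤ 0) (R : EReal) :
    errorEvents size T R = errorEventsMulti k size T R := by
  refine Set.Subset.antisymm ?_ ?_
  · rintro _ ⟨c, hc, rfl⟩
    exact ⟨fun n _ => c n, (rateMulti_const k size c).trans_le hc,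
      funext fun n => Set.iInter_const _⟩
  · rintro _ ⟨c, hc, rfl⟩
    obtain ⟨d, hd, hT⟩ := exists_code_rate_le_rateMulti hsize hsub hk c
    exact ⟨d, hd.trans hc, funext fun n => by simp only [hT, Set.compl_iUnion]⟩

variable [∀ n, MeasurableSpace (Ω n)] (k size T) (μ : ∀ n, Measure (Ω n)) (R : ℝ)

theorem epsC_eq_iInf_errorEvents :
    epsC size T μ R = ⨅ E ∈ errorEvents size T R, limsup (fun n => μ n (E n)) atTop := by
  rw [errorEvents, iInf_image]
  rfl

theorem epsCMulti_eq_iInf_errorEventsMulti :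
    epsCMulti k size T μ R =
      ⨅ E ∈ errorEventsMulti k size T R, limsup (fun n => μ n (E n)) atTop := by
  rw [errorEventsMulti, iInf_image]
  rfl

theorem rhoC_eq_iSup_errorEvents :
    rhoC size T μ R = ⨆ E ∈ errorEvents size T R,
      liminf (fun n : ℕ => (((n : ℝ)⁻¹ : ℝ) : EReal) * ENNReal.log (μ n (E n))⁻¹) atTop := by
  rw [errorEvents, iSup_image]
  rfl

theorem rhoCMulti_eq_iSup_errorEventsMulti :
    rhoCMulti k size T μ R = ⨆ E ∈ errorEventsMulti k size T R,
      liminf (fun n : ℕ => (((n : ℝ)⁻¹ : ℝ) : EReal) * ENNReal.log (μ n (E n))⁻¹) atTop := by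
  rw [errorEventsMulti, iSup_image]
  rfl

end Codes

theorem statement8_general
    {Ω : ℕ → Type} [∀ n, MeasurableSpace (Ω n)] {C : ℕ → Type}
    {size : ∀ n, C n → ℝ} (hsize : ∀ n (c : C n), 0 < size n c) {T : ∀ n, C n → Set (Ω n)}
    (μ : ∀ n, Measure (Ω n)) (R : ℝ) {k : ℕ → ℕ}
    (hk : expGrowthSup (fun n => (k n : ℝ≥0∞)) ≤ 0)
    (hsub : ∀ n, IsSubadditiveCoding (size n) (T n)) :
    epsC size T μ R = epsCMulti k size T μ R ∧
    rhoC size T μ R = rhoCMulti k size T μ R := by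
  have hE := errorEvents_eq_errorEventsMulti hsize hsub hk R
  exact ⟨by rw [epsC_eq_iInf_errorEvents, epsCMulti_eq_iInf_errorEventsMulti, hE],
    by rw [rhoC_eq_iSup_errorEvents, rhoCMulti_eq_iSup_errorEventsMulti, hE]⟩

theorem statement8
    (Ω : ℕ → Type) [∀ n, MeasurableSpace (Ω n)]
    (C : ℕ → Type) [∀ n, Nonempty (C n)]
    (size : ∀ n, C n → ℝ) (hsize : ∀ n (c : C n), 1 ≤ size n c)
    (T : ∀ n, C n → Set (Ω n)) (hT : ∀ n (c : C n), MeasurableSet (T n c))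
    (μ : ∀ n, Measure (Ω n)) (hμ : ∀ n, IsProbabilityMeasure (μ n))
    (R s : ℝ) (k : ℕ → ℕ) (hk : ∀ n : ℕ, (k n : ℝ) ≤ (n : ℝ) ^ s)
    (hsub : ∀ n (c₁ c₂ : C n), ∃ c : C n,
      size n c ≤ size n c₁ + size n c₂ ∧ T n c = T n c₁ ∪ T n c₂) :
    epsC size T μ R = epsCMulti k size T μ R ∧
    rhoC size T μ R = rhoCMulti k size T μ R :=
  statement8_general (fun n c => zero_lt_one.trans_le (hsize n c)) μ R
    (expGrowthSup_natCast_nonpos_of_le_rpow hk) hsub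

end
end

section
/- Let μ = (μ_n) be a sequence of probability measures, μ_n on a measurable space Ω_n, and let B_n ⊆ Ω_n be nonempty measurable sets. Then, as equalities in [0,+∞] (1/0 = +∞): liminf_n 1/μ_n(B_n) = min{ G_l(ν‖μ) : ν = (ν_n) a sequence of probability measures on the Ω_n with lim_n ν_n(B_n) = 1 }, and limsup_n 1/μ_n(B_n) = min{ G_u(ν‖μ) : ν = (ν_n) a sequence of probability measures on the Ω_n with lim_n ν_n(B_n) = 1 }; in both formulas the minimum is attained. -/
open MeasureTheory Filter Topology ProbabilityTheory
open scoped ENNReal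

noncomputable section

/-- `G(ν‖μ) = ∫ (dν/dμ) dν` if `ν ≪ μ`, `+∞` otherwise. -/
def Gdiv {Ω : Type} [MeasurableSpace Ω] (ν μ : Measure Ω) : ℝ≥0∞ :=
  open Classical in
  if ν ≪ μ then ∫⁻ x, ν.rnDeriv μ x ∂ν else ⊤

/-- `G_l(ν‖μ) = liminf_n G(ν_n‖μ_n)`. -/
def Gl {Ω : ℕ → Type} [∀ n, MeasurableSpace (Ω n)]
    (ν μ : ∀ n, Measure (Ω n)) : ℝ≥0∞ :=
  Filter.liminf (fun n => Gdiv (ν n) (μ n)) Filter.atTop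

/-- `G_u(ν‖μ) = limsup_n G(ν_n‖μ_n)`. -/
def Gu {Ω : ℕ → Type} [∀ n, MeasurableSpace (Ω n)]
    (ν μ : ∀ n, Measure (Ω n)) : ℝ≥0∞ :=
  Filter.limsup (fun n => Gdiv (ν n) (μ n)) Filter.atTop

/-!
Cauchy–Schwarz applied to `∫_B (dν/dμ) dμ` gives `ν(B)² / μ(B) ≤ G(ν‖μ)`. Conditioning `μ` on `B`
attains this bound with `ν(B) = 1`; when `μ(B) = 0` the bound is `∞` and any point mass in `B`
attains it. Along a sequence, the factor `ν_n(B_n)²` tends to `1`, so it disappears from the lower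
and the upper limit.
-/

section LIntegral

variable {α : Type*} [MeasurableSpace α] {μ ν : Measure α}

theorem sq_lintegral_mul_le {f g : α → ℝ≥0∞} (hf : AEMeasurable f μ) (hg : AEMeasurable g μ) :
    (∫⁻ x, f x * g x ∂μ) ^ 2 ≤ (∫⁻ x, f x ^ 2 ∂μ) * ∫⁻ x, g x ^ 2 ∂μ := by
  have holder := ENNReal.lintegral_mul_le_Lp_mul_Lq μ Real.HolderConjugate.two_two hf hg
  have sq_sqrt (t : ℝ≥0∞) : (t ^ (1 / 2 : ℝ)) ^ 2 = t := by
    rw [← ENNReal.rpow_mul_natCast]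
    norm_num
  simpa only [mul_pow, sq_sqrt, ENNReal.rpow_two, Pi.mul_apply] using pow_le_pow_left' holder 2

lemma rnDeriv_le_of_le_smul [SigmaFinite μ] {c : ℝ≥0∞} (h : ν ≤ c • μ) :
    ν.rnDeriv μ ≤ᵐ[μ] fun _ ↦ c := by
  refine ae_le_of_forall_setLIntegral_le_of_sigmaFinite (ν.measurable_rnDeriv μ) fun s _ _ ↦ ?_
  rw [setLIntegral_const]
  exact (Measure.setLIntegral_rnDeriv_le s).trans (h s)

end LIntegral

section Gdiv

variable {Ω : Type} [MeasurableSpace Ω] {μ ν : Measure Ω}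

lemma Gdiv_of_absolutelyContinuous (h : ν ≪ μ) : Gdiv ν μ = ∫⁻ x, ν.rnDeriv μ x ∂ν :=
  if_pos h

lemma Gdiv_of_not_absolutelyContinuous (h : ¬ν ≪ μ) : Gdiv ν μ = ∞ :=
  if_neg h

lemma Gdiv_eq_lintegral_sq [ν.HaveLebesgueDecomposition μ] (h : ν ≪ μ) :
    Gdiv ν μ = ∫⁻ x, ν.rnDeriv μ x ^ 2 ∂μ := by
  rw [Gdiv_of_absolutelyContinuous h,
    ← lintegral_rnDeriv_mul h (ν.measurable_rnDeriv μ).aemeasurable]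
  simp only [sq]

theorem sq_measure_div_le_Gdiv [SFinite μ] [ν.HaveLebesgueDecomposition μ] (B : Set Ω) :
    ν B ^ 2 / μ B ≤ Gdiv ν μ := by
  by_cases h : ν ≪ μ
  · refine ENNReal.div_le_of_le_mul ?_
    calc ν B ^ 2
        = (∫⁻ x in B, ν.rnDeriv μ x ∂μ) ^ 2 := by rw [Measure.setLIntegral_rnDeriv h]
      _ ≤ (∫⁻ x in B, ν.rnDeriv μ x ^ 2 ∂μ) * μ B := by
        simpa using sq_lintegral_mul_le (μ := μ.restrict B)
          (ν.measurable_rnDeriv μ).aemeasurable (aemeasurable_const (b := 1))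
      _ ≤ (∫⁻ x, ν.rnDeriv μ x ^ 2 ∂μ) * μ B := by
        gcongr
        exact Measure.restrict_le_self
      _ = Gdiv ν μ * μ B := by rw [Gdiv_eq_lintegral_sq h]
  · simp only [Gdiv_of_not_absolutelyContinuous h, le_top]

lemma inv_measure_le_Gdiv [SFinite μ] [ν.HaveLebesgueDecomposition μ] {B : Set Ω}
    (hB : ν B = 1) : (μ B)⁻¹ ≤ Gdiv ν μ := by
  simpa [hB] using sq_measure_div_le_Gdiv (μ := μ) (ν := ν) B

theorem Gdiv_le_of_le_smul [SigmaFinite μ] {c : ℝ≥0∞} (h : ν ≤ c • μ) :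
    Gdiv ν μ ≤ c * ν Set.univ := by
  have hac : ν ≪ μ := Measure.absolutelyContinuous_of_le_smul h
  calc Gdiv ν μ
      = ∫⁻ x, ν.rnDeriv μ x ∂ν := Gdiv_of_absolutelyContinuous hac
    _ ≤ ∫⁻ _, c ∂ν := lintegral_mono_ae (hac.ae_le (rnDeriv_le_of_le_smul h))
    _ = c * ν Set.univ := lintegral_const c

theorem Gdiv_cond [SigmaFinite μ] {B : Set Ω} (h₀ : μ B ≠ 0) (h_top : μ B ≠ ∞) :
    Gdiv μ[|B] μ = (μ B)⁻¹ := by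
  have := cond_isProbabilityMeasure_of_finite h₀ h_top
  have h_le : μ[|B] ≤ (μ B)⁻¹ • μ := by
    unfold ProbabilityTheory.cond
    gcongr
    exact Measure.restrict_le_self
  refine le_antisymm ?_ (inv_measure_le_Gdiv (cond_apply_self h₀ h_top))
  simpa using Gdiv_le_of_le_smul h_le

theorem exists_isProbabilityMeasure_Gdiv_eq_inv [SigmaFinite μ] {B : Set Ω} (hB : B.Nonempty)
    (h_top : μ B ≠ ∞) :
    ∃ ν : Measure Ω, IsProbabilityMeasure ν ∧ ν B = 1 ∧ Gdiv ν μ = (μ B)⁻¹ := by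
  by_cases h₀ : μ B = 0
  · obtain ⟨x, hx⟩ := hB
    have hxB : Measure.dirac x B = 1 := Measure.dirac_apply_of_mem hx
    refine ⟨Measure.dirac x, inferInstance, hxB, le_antisymm ?_ (inv_measure_le_Gdiv hxB)⟩
    simp only [h₀, ENNReal.inv_zero, le_top]
  · exact ⟨μ[|B], cond_isProbabilityMeasure_of_finite h₀ h_top, cond_apply_self h₀ h_top,
      Gdiv_cond h₀ h_top⟩

end Gdiv

section Limits

variable {ι : Type*} {l : Filter ι} [l.NeBot] {a u v : ι → ℝ≥0∞}

lemma liminf_le_liminf_of_tendsto_one_of_mul_le (ha : Tendsto a l (𝓝 1))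
    (h : a * u ≤ᶠ[l] v) : liminf u l ≤ liminf v l :=
  calc liminf u l
      = liminf a l * liminf u l := by rw [ha.liminf_eq, one_mul]
    _ ≤ liminf (a * u) l := ENNReal.le_liminf_mul
    _ ≤ liminf v l := liminf_le_liminf h

lemma limsup_le_limsup_of_tendsto_one_of_mul_le (ha : Tendsto a l (𝓝 1))
    (h : a * u ≤ᶠ[l] v) : limsup u l ≤ limsup v l :=
  calc limsup u l
      = limsup u l * liminf a l := by rw [ha.liminf_eq, mul_one]
    _ ≤ limsup (u * a) l := ENNReal.le_limsup_mul
    _ = limsup (a * u) l := by rw [mul_comm]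
    _ ≤ limsup v l := limsup_le_limsup h

end Limits

section Sequences

variable {ι : Type*} {Ω : ι → Type} [∀ i, MeasurableSpace (Ω i)]

/-- The families `ν` of probability measures with `ν i (B i) → 1` along `l`: the competitors in the
two minimisation problems. -/
def concentratingFamilies (l : Filter ι) (B : ∀ i, Set (Ω i)) : Set (∀ i, Measure (Ω i)) :=
  {ν | (∀ i, IsProbabilityMeasure (ν i)) ∧ Tendsto (fun i ↦ ν i (B i)) l (𝓝 1)}

variable {l : Filter ι} {B : ∀ i, Set (Ω i)} {μ ν : ∀ i, Measure (Ω i)}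

lemma exists_mem_concentratingFamilies_Gdiv_eq_inv [∀ i, SigmaFinite (μ i)]
    (hB : ∀ i, (B i).Nonempty) (h_top : ∀ i, μ i (B i) ≠ ∞) :
    ∃ ν ∈ concentratingFamilies l B, ∀ i, Gdiv (ν i) (μ i) = (μ i (B i))⁻¹ := by
  choose ν hν hνB hG using fun i ↦ exists_isProbabilityMeasure_Gdiv_eq_inv (hB i) (h_top i)
  exact ⟨ν, ⟨hν, by simp only [hνB, tendsto_const_nhds]⟩, hG⟩

lemma tendsto_sq_of_mem_concentratingFamilies (hν : ν ∈ concentratingFamilies l B) :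
    Tendsto (fun i ↦ ν i (B i) ^ 2) l (𝓝 1) := by
  simpa only [one_pow] using ENNReal.Tendsto.pow (n := 2) hν.2

lemma sq_mul_inv_le_Gdiv_of_mem_concentratingFamilies [∀ i, SigmaFinite (μ i)]
    (hν : ν ∈ concentratingFamilies l B) (i : ι) :
    ν i (B i) ^ 2 * (μ i (B i))⁻¹ ≤ Gdiv (ν i) (μ i) := by
  have := hν.1 i
  exact sq_measure_div_le_Gdiv (B i)

theorem statement12_general [l.NeBot] [∀ i, SigmaFinite (μ i)] (hB : ∀ i, (B i).Nonempty)
    (h_top : ∀ i, μ i (B i) ≠ ∞) :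
    ∃ ν ∈ concentratingFamilies l B, (∀ i, Gdiv (ν i) (μ i) = (μ i (B i))⁻¹) ∧
      IsMinOn (fun ν ↦ liminf (fun i ↦ Gdiv (ν i) (μ i)) l) (concentratingFamilies l B) ν ∧
      IsMinOn (fun ν ↦ limsup (fun i ↦ Gdiv (ν i) (μ i)) l) (concentratingFamilies l B) ν := by
  obtain ⟨ν, hν, hG⟩ := exists_mem_concentratingFamilies_Gdiv_eq_inv (l := l) hB h_top
  refine ⟨ν, hν, hG, isMinOn_iff.2 fun ν' hν' ↦ ?_, isMinOn_iff.2 fun ν' hν' ↦ ?_⟩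
  · simp only [hG]
    exact liminf_le_liminf_of_tendsto_one_of_mul_le (tendsto_sq_of_mem_concentratingFamilies hν')
      (.of_forall (sq_mul_inv_le_Gdiv_of_mem_concentratingFamilies hν'))
  · simp only [hG]
    exact limsup_le_limsup_of_tendsto_one_of_mul_le (tendsto_sq_of_mem_concentratingFamilies hν')
      (.of_forall (sq_mul_inv_le_Gdiv_of_mem_concentratingFamilies hν'))

end Sequences

theorem statement12
    (Ω : ℕ → Type) [∀ n, MeasurableSpace (Ω n)]
    (μ : ∀ n, Measure (Ω n)) (hμ : ∀ n, IsProbabilityMeasure (μ n))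
    (B : ∀ n, Set (Ω n)) (hBne : ∀ n, (B n).Nonempty) (hBmeas : ∀ n, MeasurableSet (B n)) :
    (∃ ν : ∀ n, Measure (Ω n), (∀ n, IsProbabilityMeasure (ν n)) ∧
      Filter.Tendsto (fun n => ν n (B n)) Filter.atTop (nhds 1) ∧
      Filter.liminf (fun n => (μ n (B n))⁻¹) Filter.atTop = Gl ν μ ∧
      ∀ ν' : ∀ n, Measure (Ω n), (∀ n, IsProbabilityMeasure (ν' n)) →
        Filter.Tendsto (fun n => ν' n (B n)) Filter.atTop (nhds 1) → Gl ν μ ≤ Gl ν' μ) ∧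
    (∃ ν : ∀ n, Measure (Ω n), (∀ n, IsProbabilityMeasure (ν n)) ∧
      Filter.Tendsto (fun n => ν n (B n)) Filter.atTop (nhds 1) ∧
      Filter.limsup (fun n => (μ n (B n))⁻¹) Filter.atTop = Gu ν μ ∧
      ∀ ν' : ∀ n, Measure (Ω n), (∀ n, IsProbabilityMeasure (ν' n)) →
        Filter.Tendsto (fun n => ν' n (B n)) Filter.atTop (nhds 1) → Gu ν μ ≤ Gu ν' μ) := by
  obtain ⟨ν, ⟨hν, hνB⟩, hG, hl, hu⟩ :=
    statement12_general (l := atTop) hBne fun n ↦ measure_ne_top (μ n) (B n)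
  exact ⟨⟨ν, hν, hνB, by simp only [Gl, hG], fun ν' hν' hνB' ↦ hl ⟨hν', hνB'⟩⟩,
    ⟨ν, hν, hνB, by simp only [Gu, hG], fun ν' hν' hνB' ↦ hu ⟨hν', hνB'⟩⟩⟩

end
end
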